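/- (q-Gauss summation) Let 0<q<1 and a,b,c∈ℂ with c ∉ {1,q^{-1},q^{-2},…}, ab≠0 and |c/(ab)|<1. Then ₂φ₁(a,b;c;q,c/(ab)) = (c/a, c/b;q)_∞ / (c, c/(ab);q)_∞. -/

import Mathlib

/-!
The proof is by contiguity in `c`. Write `t_k(c)` for the `k`-th term of the series at argument
`z = c/(ab)` and `F(c)` for its sum. With `x = q^k`, the polynomial identity
`(1-z)(1-cx) - (1-c/a)(1-c/b)x = (1-x)(1-cx) - z(1-ax)(1-bx)` says that
`(1-z) t_k(c) - (1-c/a)(1-c/b)/(1-c) t_k(cq) = (1-q^k) t_k(c) - (1-q^{k+1}) t_{k+1}(c)`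
(`gaussTerm_telescope`). Summing over `k`, the right side telescopes to `0`, hence
`F(c) = (1-c/a)(1-c/b) / ((1-c)(1-c/(ab))) F(cq)`, and after `N` steps
`F(c) = (c/a)_N (c/b)_N / ((c)_N (c/(ab))_N) F(cq^N)` (`gauss_iterate`).

As `N → ∞` the finite products tend to the infinite ones, and `F(cq^N) → 1` by dominated
convergence. The domination `‖t_k(cq^N)‖ ≤ C ‖c/(ab)‖^k`, uniform in `N` (`gaussTerm_bound`), comes
from `(cq^N)_k = (c)_{N+k} / (c)_N`, where `(c)_n` is bounded, and bounded away from `0` since its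
limit `(c)_∞` is nonzero.
-/

noncomputable section

/-- The finite q-shifted factorial `(a;q)_k`. -/
def qp (q a : ℂ) (k : ℕ) : ℂ := ∏ j ∈ Finset.range k, (1 - a * q ^ j)

/-- The infinite q-shifted factorial `(a;q)_∞`. -/
def qpi (q a : ℂ) : ℂ := ∏' j : ℕ, (1 - a * q ^ j)

/-- The basic hypergeometric series `₂φ₁(a,b;c;q,z)`. -/
def phi21 (q a b c z : ℂ) : ℂ :=
  ∑' k : ℕ, qp q a k * qp q b k / (qp q c k * qp q q k) * z ^ k

open Filter Topology

/-- The `k`-th term of `₂φ₁(a,b;c;q,c/(ab))`. -/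
def gaussTerm (q a b c : ℂ) (k : ℕ) : ℂ :=
  qp q a k * qp q b k / (qp q c k * qp q q k) * (c / (a * b)) ^ k

lemma qp_succ (q a : ℂ) (k : ℕ) : qp q a (k + 1) = qp q a k * (1 - a * q ^ k) :=
  Finset.prod_range_succ _ _

lemma qp_add (q a : ℂ) (n k : ℕ) : qp q a (n + k) = qp q a n * qp q (a * q ^ n) k := by
  simp only [qp, Finset.prod_range_add, pow_add, mul_assoc]

lemma qp_ne_zero {q a : ℂ} (h : ∀ n : ℕ, a * q ^ n ≠ 1) (k : ℕ) : qp q a k ≠ 0 :=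
  Finset.prod_ne_zero_iff.2 fun j _ => sub_ne_zero.2 (h j).symm

lemma mul_pow_ne_one {q z : ℂ} (hq : ‖q‖ < 1) (hz : ‖z‖ < 1) (n : ℕ) : z * q ^ n ≠ 1 := by
  intro h
  have h1 : ‖z * q ^ n‖ = 1 := by rw [h, norm_one]
  rw [norm_mul, norm_pow] at h1
  have h2 : ‖q‖ ^ n ≤ 1 := pow_le_one₀ (norm_nonneg _) hq.le
  nlinarith [norm_nonneg z]

lemma summable_norm_neg_mul_pow {q : ℂ} (hq : ‖q‖ < 1) (a : ℂ) :
    Summable fun j : ℕ => ‖-(a * q ^ j)‖ := by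
  simp only [norm_neg, norm_mul, norm_pow]
  exact (summable_geometric_of_lt_one (norm_nonneg _) hq).mul_left _

lemma tendsto_qp {q : ℂ} (hq : ‖q‖ < 1) (a : ℂ) :
    Tendsto (qp q a) atTop (𝓝 (qpi q a)) := by
  have h := multipliable_one_add_of_summable (summable_norm_neg_mul_pow hq a)
  simp only [← sub_eq_add_neg] at h
  exact h.tendsto_prod_tprod_nat

lemma qpi_ne_zero {q a : ℂ} (hq : ‖q‖ < 1) (h : ∀ n : ℕ, a * q ^ n ≠ 1) : qpi q a ≠ 0 := by
  have := tprod_one_add_ne_zero_of_summable (f := fun j : ℕ => -(a * q ^ j))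
    (fun j => by rw [← sub_eq_add_neg]; exact sub_ne_zero.2 (h j).symm)
    (summable_norm_neg_mul_pow hq a)
  simp only [← sub_eq_add_neg] at this
  exact this

lemma exists_norm_le_of_tendsto {u : ℕ → ℂ} {l : ℂ} (h : Tendsto u atTop (𝓝 l)) :
    ∃ C, 0 < C ∧ ∀ n, ‖u n‖ ≤ C := by
  obtain ⟨C, hC, hb⟩ := (Metric.isBounded_range_of_tendsto u h).exists_pos_norm_le
  exact ⟨C, hC, fun n => hb _ ⟨n, rfl⟩⟩

lemma exists_norm_qp_le {q : ℂ} (hq : ‖q‖ < 1) (a : ℂ) : ∃ C, 0 < C ∧ ∀ n, ‖qp q a n‖ ≤ C :=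
  exists_norm_le_of_tendsto (tendsto_qp hq a)

lemma exists_norm_qp_inv_le {q a : ℂ} (hq : ‖q‖ < 1) (h : ∀ n : ℕ, a * q ^ n ≠ 1) :
    ∃ C, 0 < C ∧ ∀ n, ‖(qp q a n)⁻¹‖ ≤ C :=
  exists_norm_le_of_tendsto ((tendsto_qp hq a).inv₀ (qpi_ne_zero hq h))

lemma shift_ne_one {q c : ℂ} (hc : ∀ n : ℕ, c * q ^ n ≠ 1) (N n : ℕ) :
    c * q ^ N * q ^ n ≠ 1 := by
  rw [mul_assoc, ← pow_add]; exact hc _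

/-- A geometric bound on the terms, with a constant uniform over all shifts `c ↦ cq^N`. -/
lemma gaussTerm_bound {q c : ℂ} (hq : ‖q‖ < 1) (a b : ℂ) (hc : ∀ n : ℕ, c * q ^ n ≠ 1) :
    ∃ C, 0 < C ∧ ∀ N k : ℕ,
      ‖gaussTerm q a b (c * q ^ N) k‖ ≤ C * (‖c / (a * b)‖ * ‖q‖ ^ N) ^ k := by
  obtain ⟨A, hA, hA'⟩ := exists_norm_qp_le hq a
  obtain ⟨B, hB, hB'⟩ := exists_norm_qp_le hq b
  obtain ⟨D, hD, hD'⟩ := exists_norm_qp_le hq c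
  obtain ⟨E, hE, hE'⟩ := exists_norm_qp_inv_le hq hc
  obtain ⟨G, hG, hG'⟩ := exists_norm_qp_inv_le hq (mul_pow_ne_one hq hq)
  refine ⟨A * B * (D * E) * G, by positivity, fun N k => ?_⟩
  have h1 : (qp q (c * q ^ N) k)⁻¹ = qp q c N * (qp q c (N + k))⁻¹ := by
    have := qp_ne_zero hc N
    rw [qp_add, mul_inv, mul_inv_cancel_left₀ this]
  have h2 : gaussTerm q a b (c * q ^ N) k = qp q a k * qp q b k *
      (qp q c N * (qp q c (N + k))⁻¹) * (qp q q k)⁻¹ * (c / (a * b) * q ^ N) ^ k := by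
    rw [← h1, gaussTerm, mul_div_right_comm c, div_eq_mul_inv _ (_ * _), mul_inv]
    ring
  rw [h2]
  simp only [norm_mul, norm_pow]
  gcongr
  exacts [hA' k, hB' k, hD' N, hE' _, hG' k]

lemma gaussTerm_summable {q a b c : ℂ} (hq : ‖q‖ < 1) (hc : ∀ n : ℕ, c * q ^ n ≠ 1)
    (hz : ‖c / (a * b)‖ < 1) : Summable (gaussTerm q a b c) := by
  obtain ⟨C, -, h⟩ := gaussTerm_bound hq a b hc
  refine Summable.of_norm_bounded
    ((summable_geometric_of_lt_one (norm_nonneg _) hz).mul_left C) fun k => ?_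
  simpa using h 0 k

/-- The telescoping relation between the terms at `c` and at `cq`. -/
lemma gaussTerm_telescope {q a b c : ℂ} (hq : ‖q‖ < 1) (hc : ∀ n : ℕ, c * q ^ n ≠ 1)
    (ha : a ≠ 0) (hb : b ≠ 0) (k : ℕ) :
    (1 - c / (a * b)) * gaussTerm q a b c k
      - (1 - c / a) * (1 - c / b) / (1 - c) * gaussTerm q a b (c * q) k
    = (1 - q ^ k) * gaussTerm q a b c k - (1 - q ^ (k + 1)) * gaussTerm q a b c (k + 1) := by
  have hc0 : 1 - c ≠ 0 := sub_ne_zero.2 (by simpa using (hc 0).symm)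
  have hck : 1 - c * q ^ k ≠ 0 := sub_ne_zero.2 (hc k).symm
  have hqk : 1 - q * q ^ k ≠ 0 := sub_ne_zero.2 (mul_pow_ne_one hq hq k).symm
  have hC := qp_ne_zero hc k
  have hQ := qp_ne_zero (mul_pow_ne_one hq hq) k
  have hshift : qp q (c * q) k = qp q c k * (1 - c * q ^ k) / (1 - c) := by
    rw [eq_div_iff hc0, ← qp_succ, add_comm k 1, qp_add]
    simp [qp, mul_comm]
  have h1 : gaussTerm q a b (c * q) k
      = gaussTerm q a b c k * (q ^ k * (1 - c) / (1 - c * q ^ k)) := by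
    rw [gaussTerm, gaussTerm, hshift, mul_div_right_comm c, mul_pow]
    field_simp
  have h2 : gaussTerm q a b c (k + 1) = gaussTerm q a b c k *
      ((1 - a * q ^ k) * (1 - b * q ^ k) / ((1 - c * q ^ k) * (1 - q * q ^ k))
        * (c / (a * b))) := by
    rw [gaussTerm, gaussTerm, qp_succ, qp_succ, qp_succ, qp_succ, pow_succ]
    field_simp
  rw [h1, h2, pow_succ' q k]
  generalize gaussTerm q a b c k = t
  generalize q ^ k = x at *
  have hqk' : 1 - x * q ≠ 0 := by rwa [mul_comm]
  field_simp
  ring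

/-- The contiguous relation `(1 - c/(ab)) F(c) = (1 - c/a)(1 - c/b)/(1 - c) F(cq)`. -/
lemma gauss_step {q a b c : ℂ} (hq : ‖q‖ < 1) (hc : ∀ n : ℕ, c * q ^ n ≠ 1)
    (ha : a ≠ 0) (hb : b ≠ 0) (hz : ‖c / (a * b)‖ < 1) :
    (1 - c / (a * b)) * ∑' k, gaussTerm q a b c k
      = (1 - c / a) * (1 - c / b) / (1 - c) * ∑' k, gaussTerm q a b (c * q) k := by
  have hs := gaussTerm_summable hq hc hz
  have hs' : Summable (gaussTerm q a b (c * q)) := by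
    refine gaussTerm_summable hq (by simpa using shift_ne_one hc 1) ?_
    rw [mul_div_right_comm, norm_mul]
    nlinarith [norm_nonneg q, norm_nonneg (c / (a * b))]
  have hsum := ((hs.hasSum.mul_left (1 - c / (a * b))).sub
    (hs'.hasSum.mul_left ((1 - c / a) * (1 - c / b) / (1 - c)))).tendsto_sum_nat
  simp only [gaussTerm_telescope hq hc ha hb] at hsum
  have hlim : Tendsto (fun n : ℕ => (1 - q ^ n) * gaussTerm q a b c n) atTop (𝓝 0) := by
    have h := ((tendsto_pow_atTop_nhds_zero_of_norm_lt_one hq).const_sub 1).mul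
      hs.tendsto_atTop_zero
    simpa using h
  have hsum' : Tendsto (fun n : ℕ => ∑ i ∈ Finset.range n, ((1 - q ^ i) * gaussTerm q a b c i
      - (1 - q ^ (i + 1)) * gaussTerm q a b c (i + 1))) atTop (𝓝 0) := by
    simp only [Finset.sum_range_sub' (fun i : ℕ => (1 - q ^ i) * gaussTerm q a b c i)]
    simpa using hlim.neg
  exact sub_eq_zero.1 (tendsto_nhds_unique hsum hsum')

lemma norm_shift_lt {q a b c : ℂ} (hq : ‖q‖ < 1) (hz : ‖c / (a * b)‖ < 1) (N : ℕ) :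
    ‖c * q ^ N / (a * b)‖ < 1 := by
  rw [mul_div_right_comm, norm_mul, norm_pow]
  have h2 : ‖q‖ ^ N ≤ 1 := pow_le_one₀ (norm_nonneg _) hq.le
  nlinarith [norm_nonneg (c / (a * b))]

lemma gauss_iterate {q a b c : ℂ} (hq : ‖q‖ < 1) (hc : ∀ n : ℕ, c * q ^ n ≠ 1)
    (ha : a ≠ 0) (hb : b ≠ 0) (hz : ‖c / (a * b)‖ < 1) (N : ℕ) :
    ∑' k, gaussTerm q a b c k
      = qp q (c / a) N * qp q (c / b) N / (qp q c N * qp q (c / (a * b)) N)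
        * ∑' k, gaussTerm q a b (c * q ^ N) k := by
  induction N with
  | zero => simp [qp]
  | succ N ih =>
    have hstep := gauss_step hq (shift_ne_one hc N) ha hb (norm_shift_lt hq hz N)
    have hz1 : 1 - c / (a * b) * q ^ N ≠ 0 := sub_ne_zero.2 (mul_pow_ne_one hq hz N).symm
    rw [mul_div_right_comm c, mul_div_right_comm c, mul_div_right_comm c, mul_comm,
      ← eq_div_iff hz1, mul_assoc c, ← pow_succ] at hstep
    rw [ih, hstep]
    simp only [qp_succ, div_eq_mul_inv, mul_inv]
    ring

/-- Dominated convergence: only the `k = 0` term survives as the shift of `c` grows. -/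
lemma gauss_limit {q a b c : ℂ} (hq : ‖q‖ < 1) (hc : ∀ n : ℕ, c * q ^ n ≠ 1)
    (hz : ‖c / (a * b)‖ < 1) :
    Tendsto (fun N : ℕ => ∑' k, gaussTerm q a b (c * q ^ N) k) atTop (𝓝 1) := by
  obtain ⟨C, hC, h⟩ := gaussTerm_bound hq a b hc
  have hone : ∑' k : ℕ, (if k = 0 then (1 : ℂ) else 0) = 1 := by simp
  rw [← hone]
  refine tendsto_tsum_of_dominated_convergence
    ((summable_geometric_of_lt_one (norm_nonneg _) hz).mul_left C) (fun k => ?_)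
    (Eventually.of_forall fun N k => (h N k).trans ?_)
  · rcases eq_or_ne k 0 with rfl | hk
    · simp [gaussTerm, qp]
    · rw [if_neg hk]
      refine squeeze_zero_norm (fun N => h N k) ?_
      have h1 := (((tendsto_pow_atTop_nhds_zero_of_lt_one (norm_nonneg q) hq).const_mul
        ‖c / (a * b)‖).pow k).const_mul C
      simpa [hk] using h1
  · gcongr
    exact mul_le_of_le_one_right (norm_nonneg _) (pow_le_one₀ (norm_nonneg _) hq.le)

/-- q-Gauss summation:
`₂φ₁(a,b;c;q,c/(ab)) = (c/a;q)_∞ (c/b;q)_∞ / ((c;q)_∞ (c/(ab);q)_∞)`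
for `0<q<1`, `c ∉ {1,q^{-1},q^{-2},…}`, `ab ≠ 0` and `|c/(ab)| < 1`. -/
theorem stmt4 (q : ℝ) (hq0 : 0 < q) (hq1 : q < 1) (a b c : ℂ)
    (hc : ∀ n : ℕ, c * (q : ℂ) ^ n ≠ 1) (hab : a * b ≠ 0)
    (harg : ‖c / (a * b)‖ < 1) :
    phi21 (q : ℂ) a b c (c / (a * b)) =
      qpi (q : ℂ) (c / a) * qpi (q : ℂ) (c / b) /
        (qpi (q : ℂ) c * qpi (q : ℂ) (c / (a * b))) := by
  have hq : ‖(q : ℂ)‖ < 1 := by rwa [Complex.norm_real, Real.norm_of_nonneg hq0.le]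
  obtain ⟨ha, hb⟩ := mul_ne_zero_iff.1 hab
  have hlim := (((tendsto_qp hq (c / a)).mul (tendsto_qp hq (c / b))).div
    ((tendsto_qp hq c).mul (tendsto_qp hq (c / (a * b))))
    (mul_ne_zero (qpi_ne_zero hq hc) (qpi_ne_zero hq (mul_pow_ne_one hq harg)))).mul
    (gauss_limit (a := a) (b := b) hq hc harg)
  rw [mul_one] at hlim
  -- The sequence in `hlim` is constant, equal to the series.
  refine tendsto_nhds_unique (tendsto_const_nhds.congr fun N => ?_) hlim
  exact gauss_iterate hq hc ha hb harg N
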